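/- Let θ, φ : ℝ → ℝ be twice differentiable with θ'(s)² + sin²θ(s) · φ'(s)² = 1 for all s. Let α, β : ℝ → ℝ be differentiable with α' = cos θ · φ' · β, β' = −cos θ · φ' · α, and α² + β² = 1 everywhere. Let Θ : ℝ → ℝ be differentiable such that for every s one has α(s)θ'(s) + β(s) sin θ(s) φ'(s) ≠ 0 and tan Θ(s) = (α(s) sin θ(s) φ'(s) − β(s) θ'(s)) / (α(s) θ'(s) + β(s) sin θ(s) φ'(s)). Then Θ'(s) = sin θ(s)(φ''(s)θ'(s) − θ''(s)φ'(s)) + cos θ(s) φ'(s)(sin²θ(s) φ'(s)² + 2 θ'(s)²) for every s. -/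

import Mathlib

/-!
In the frame `e_θ, e_φ` the tangent vector is `(a, b) = (θ', sin θ · φ')`. With `D = αa + βb` and
`N = αb - βa` the pair `(D, N)` is the tangent vector expressed in the orthonormal frame
`(X, X^⊥)`, so `D² + N² = 1`, and `tan Θ = N / D` forces `Θ' = N'D - ND'`
(`deriv_eq_of_tan_eq_div`). Expanding with the transport equations and
`α² + β² = 1` gives `N'D - ND' = (ab' - ba') + cos θ · φ' · (a² + b²)`, which is the formula because
`ab' - ba' = sin θ (φ''θ' - θ''φ') + cos θ · φ' · θ'²`.

Since `Real.tan` takes the junk value `0` where `cos Θ = 0`, such points need a separate argument.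
There `N = 0`, so `tan Θ` stays small nearby, while a nonzero small `cos Θ` would make it large.
Hence `cos Θ` and `N` vanish identically near the point, and both sides of `Θ' = N'D - ND'` are `0`.
-/

open Filter Topology in
/-- The derivative of an angle whose tangent is the slope of a unit vector `(D, N)` with `D ≠ 0`,
including at points where `cos Θ = 0` and `tan Θ` is the junk value `0`. -/
theorem deriv_eq_of_tan_eq_div {Θ N D : ℝ → ℝ} {s Θ' N' D' : ℝ}
    (hΘ : HasDerivAt Θ Θ' s) (hN : HasDerivAt N N' s) (hD : HasDerivAt D D' s)
    (hunit : ∀ t, D t ^ 2 + N t ^ 2 = 1) (hD0 : ∀ t, D t ≠ 0)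
    (htan : ∀ t, Real.tan (Θ t) = N t / D t) :
    Θ' = N' * D s - N s * D' := by
  have hcos := hΘ.cos
  by_cases hc : Real.cos (Θ s) = 0
  · have hN0 : N s = 0 := by
      have h := htan s
      rw [Real.tan_eq_sin_div_cos, hc, div_zero, eq_comm, div_eq_zero_iff] at h
      exact h.resolve_right (hD0 s)
    have hsin : Real.sin (Θ s) ≠ 0 := by
      intro h
      have := Real.sin_sq_add_cos_sq (Θ s)
      rw [h, hc] at this
      norm_num at this
    have hNsmall : ∀ᶠ t in 𝓝 s, N t ^ 2 < 1 / 2 :=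
      (hN.continuousAt.pow 2).eventually_lt_const (by simp [hN0])
    have hcsmall : ∀ᶠ t in 𝓝 s, Real.cos (Θ t) ^ 2 < 1 / 2 :=
      (hcos.continuousAt.pow 2).eventually_lt_const (by simp [hc])
    have hcz : ∀ᶠ t in 𝓝 s, Real.cos (Θ t) = 0 := by
      filter_upwards [hNsmall, hcsmall] with t h1 h2
      by_contra h3
      have h := htan t
      rw [Real.tan_eq_sin_div_cos, div_eq_div_iff h3 (hD0 t)] at h
      -- Away from the junk value, `cos Θ = ± D`, so `cos² Θ + N² = 1`.
      have h4 : Real.cos (Θ t) ^ 2 = D t ^ 2 := by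
        linear_combination (-Real.cos (Θ t) ^ 2) * hunit t
          + D t ^ 2 * Real.sin_sq_add_cos_sq (Θ t)
          - (Real.sin (Θ t) * D t + N t * Real.cos (Θ t)) * h
      linarith [hunit t]
    have hNz : N =ᶠ[𝓝 s] fun _ => 0 := by
      filter_upwards [hcz] with t h1
      have h := htan t
      rw [Real.tan_eq_sin_div_cos, h1, div_zero, eq_comm, div_eq_zero_iff] at h
      exact h.resolve_right (hD0 t)
    have hN' : N' = 0 := hN.unique ((hasDerivAt_const s (0 : ℝ)).congr_of_eventuallyEq hNz)
    have hΘ' : -Real.sin (Θ s) * Θ' = 0 :=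
      hcos.unique ((hasDerivAt_const s (0 : ℝ)).congr_of_eventuallyEq hcz)
    have : Θ' = 0 := (mul_eq_zero.mp hΘ').resolve_left (neg_ne_zero.mpr hsin)
    rw [this, hN', hN0]
    ring
  · have heq : (fun t => Real.sin (Θ t) * D t) =ᶠ[𝓝 s] fun t => Real.cos (Θ t) * N t := by
      filter_upwards [hcos.continuousAt.eventually_ne hc] with t h3
      have h := htan t
      rw [Real.tan_eq_sin_div_cos, div_eq_div_iff h3 (hD0 t)] at h
      linarith
    have h0 : Real.sin (Θ s) * D s = Real.cos (Θ s) * N s := heq.self_of_nhds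
    have h1 := (hΘ.sin.mul hD).unique ((hcos.mul hN).congr_of_eventuallyEq heq)
    apply mul_left_cancel₀ hc
    linear_combination D s * h1 - (Θ' * N s + D') * h0 - Real.cos (Θ s) * Θ' * hunit s

/-- The angle `Θ` of the parallel transport along a unit-speed spherical curve given in
polar coordinates satisfies
`Θ' = sin θ (φ''θ' - θ''φ') + cos θ · φ' · (sin²θ · φ'² + 2θ'²)`. -/
theorem stmt4 (θ φ α β Θ : ℝ → ℝ)
    (hθ : Differentiable ℝ θ) (hθ2 : Differentiable ℝ (deriv θ))
    (hφ : Differentiable ℝ φ) (hφ2 : Differentiable ℝ (deriv φ))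
    (harc : ∀ s, deriv θ s ^ 2 + Real.sin (θ s) ^ 2 * deriv φ s ^ 2 = 1)
    (hα : Differentiable ℝ α) (hβ : Differentiable ℝ β)
    (hα' : ∀ s, deriv α s = Real.cos (θ s) * deriv φ s * β s)
    (hβ' : ∀ s, deriv β s = -(Real.cos (θ s) * deriv φ s * α s))
    (hunit : ∀ s, α s ^ 2 + β s ^ 2 = 1)
    (hΘ : Differentiable ℝ Θ)
    (hden : ∀ s, α s * deriv θ s + β s * Real.sin (θ s) * deriv φ s ≠ 0)
    (htan : ∀ s, Real.tan (Θ s) =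
      (α s * Real.sin (θ s) * deriv φ s - β s * deriv θ s) /
        (α s * deriv θ s + β s * Real.sin (θ s) * deriv φ s)) :
    ∀ s, deriv Θ s =
      Real.sin (θ s) * (deriv (deriv φ) s * deriv θ s - deriv (deriv θ) s * deriv φ s) +
        Real.cos (θ s) * deriv φ s *
          (Real.sin (θ s) ^ 2 * deriv φ s ^ 2 + 2 * deriv θ s ^ 2) := by
  intro s
  have dθ := (hθ s).hasDerivAt
  have da := (hθ2 s).hasDerivAt
  have dφ' := (hφ2 s).hasDerivAt
  have dα := (hα s).hasDerivAt
  have dβ := (hβ s).hasDerivAt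
  rw [hα'] at dα
  rw [hβ'] at dβ
  have hunit' : ∀ t, (α t * deriv θ t + β t * Real.sin (θ t) * deriv φ t) ^ 2
      + (α t * Real.sin (θ t) * deriv φ t - β t * deriv θ t) ^ 2 = 1 := fun t => by
    linear_combination (α t ^ 2 + β t ^ 2) * harc t + hunit t
  have key := deriv_eq_of_tan_eq_div (hΘ s).hasDerivAt
    (((dα.mul dθ.sin).mul dφ').sub (dβ.mul da))
    ((dα.mul da).add ((dβ.mul dθ.sin).mul dφ')) hunit' hden htan
  simp only [Pi.mul_apply, Pi.add_apply, Pi.sub_apply] at key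
  rw [key]
  have h1 := hunit s
  generalize deriv (deriv θ) s = a' at *
  generalize deriv (deriv φ) s = p' at *
  generalize deriv θ s = a at *
  generalize deriv φ s = p at *
  generalize Real.sin (θ s) = S at *
  generalize Real.cos (θ s) = C at *
  -- `N'D - ND'` is exactly `α² + β²` times the claimed expression.
  linear_combination (S * (p' * a - a' * p) + C * p * (S ^ 2 * p ^ 2 + 2 * a ^ 2)) * h1
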